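/- Let G be a graph of maximum degree at most d with d ≥ 3, and M a maximal induced matching of G that is stable under the local-search exchange operation. Suppose c_G(xy) ≥ f and n_{xy} ≥ g for every edge xy of G. Then Σ_{xy ∈ M} |PC_G(M, xy)| ≤ (4d² − 1 − 2f − 6g)·|M| + Σ_{xy ∈ M} m_{xy}, where m_{xy} is the number of edges of G with both endpoints in (N_G(x) ∪ N_G(y)) \ {x, y}. -/

import Mathlib

open Classical

variable {V : Type*}

/-- Two edges (as `Sym2 V`) are in conflict: they are at distance at most 2
in the line graph, i.e. they share a vertex or some edge of `G` joins them. -/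
def Conflict (G : SimpleGraph V) (e f : Sym2 V) : Prop :=
  ∃ a ∈ e, ∃ b ∈ f, a = b ∨ G.Adj a b

/-- `C_G(e)`: the set of edges of `G` in conflict with `e` (including `e`). -/
def CSet (G : SimpleGraph V) (e : Sym2 V) : Set (Sym2 V) :=
  {f | f ∈ G.edgeSet ∧ Conflict G e f}

/-- `PC_G(M, e)`: the private conflict edges of `e` with respect to `M`. -/
def PCSet (G : SimpleGraph V) (M : Set (Sym2 V)) (e : Sym2 V) : Set (Sym2 V) :=
  CSet G e \ ⋃ f ∈ M \ {e}, CSet G f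

/-- `M` is an induced matching of `G`. -/
def IsInducedMatching (G : SimpleGraph V) (M : Set (Sym2 V)) : Prop :=
  M ⊆ G.edgeSet ∧ ∀ e ∈ M, ∀ f ∈ M, e ≠ f → ¬ Conflict G e f

/-- `M` is a maximal induced matching of `G`. -/
def IsMaximalInducedMatching (G : SimpleGraph V) (M : Set (Sym2 V)) : Prop :=
  IsInducedMatching G M ∧ ∀ M', IsInducedMatching G M' → M ⊆ M' → M' = M

/-- `M` is stable under the local-search exchange operation: any two distinct
private conflict edges of an edge of `M` conflict with each other. -/
def LSStable (G : SimpleGraph V) (M : Set (Sym2 V)) : Prop :=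
  ∀ e ∈ M, ∀ e' ∈ PCSet G M e, ∀ e'' ∈ PCSet G M e, e' ≠ e'' → e'' ∈ CSet G e'

/-- The edges of `G` with both endpoints in `S`. -/
def edgesWithin (G : SimpleGraph V) (S : Set V) : Set (Sym2 V) :=
  {e | e ∈ G.edgeSet ∧ ∀ a ∈ e, a ∈ S}

/-- The edges of `G` with one endpoint in `S` and the other in `T`. -/
def edgesBetween (G : SimpleGraph V) (S T : Set V) : Set (Sym2 V) :=
  {e | e ∈ G.edgeSet ∧ ∃ a b : V, e = s(a, b) ∧ a ∈ S ∧ b ∈ T}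

/-- `G` has no induced cycle of length 4. -/
def C4Free (G : SimpleGraph V) : Prop :=
  ¬ ∃ a b c d : V, G.Adj a b ∧ G.Adj b c ∧ G.Adj c d ∧ G.Adj d a ∧
      ¬ G.Adj a c ∧ ¬ G.Adj b d ∧ a ≠ c ∧ b ≠ d

/-- `G` has no induced cycle of length 5. -/
def C5Free (G : SimpleGraph V) : Prop :=
  ¬ ∃ a b c d e : V, G.Adj a b ∧ G.Adj b c ∧ G.Adj c d ∧ G.Adj d e ∧ G.Adj e a ∧
      ¬ G.Adj a c ∧ ¬ G.Adj a d ∧ ¬ G.Adj b d ∧ ¬ G.Adj b e ∧ ¬ G.Adj c e ∧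
      a ≠ c ∧ a ≠ d ∧ b ≠ d ∧ b ≠ e ∧ c ≠ e

/-- `G` has no induced `K_{1,3}` (claw). -/
def ClawFree (G : SimpleGraph V) : Prop :=
  ¬ ∃ v a b c : V, G.Adj v a ∧ G.Adj v b ∧ G.Adj v c ∧
      ¬ G.Adj a b ∧ ¬ G.Adj a c ∧ ¬ G.Adj b c ∧ a ≠ b ∧ a ≠ c ∧ b ≠ c

/-- For an edge `e = s(x,y)`, the set of edges with both endpoints in
`(N_G(x) ∪ N_G(y)) \ {x, y}`. -/
noncomputable def mAround (G : SimpleGraph V) (e : Sym2 V) : ℕ :=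
  (edgesWithin G ((⋃ a ∈ e, G.neighborSet a) \ {a : V | a ∈ e})).ncard

/-!
Fix an edge `xy ∈ M` and let `P` be the set of vertices outside the closed neighbourhoods of all
other edges of `M`, so that the private conflict edges of `xy` are its conflict edges inside `P`.
Put `Z = P \ (N(x) ∪ N(y))`. A private conflict edge meets `{x, y}`, which accounts for at most
`2d - 1` edges, or lies within `(N(x) ∪ N(y)) \ {x, y}`, or joins `N(x) ∩ P` or `N(y) ∩ P` to `Z`.

The edges between `N(x) ∩ P` and `Z` conflict pairwise by stability, and `Z` is independent since
every edge conflicts with some edge of `M`. Choose `a ∈ N(x) ∩ P` with the most neighbours in `Z`.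
If `a'z'` is such an edge with `a' ≠ a` and `a' ≁ a`, then `a ∼ z'`: otherwise maximality gives a
neighbour `z ∈ Z` of `a` not adjacent to `a'`, and `az`, `a'z'` would not conflict. Hence `a'z'`
lies within `(N(x) ∪ N(a)) \ {x, a}`. But many edges within this set make `c_G(xa)` small, because
`c_G(xa) + m_{xa} + d n_{xa} + 2d ≤ 2d² + 1` by counting degrees, so that `c_G(xa) ≥ f` limits
the number of edges between `N(x) ∩ P` and `Z`.
-/

namespace Conflict

variable {G : SimpleGraph V} {e e' : Sym2 V} {x y : V}

protected theorem refl (G : SimpleGraph V) (e : Sym2 V) : Conflict G e e :=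
  ⟨e.out.1, e.out_fst_mem, e.out.1, e.out_fst_mem, .inl rfl⟩

protected theorem symm (h : Conflict G e e') : Conflict G e' e := by
  obtain ⟨a, ha, b, hb, hab⟩ := h
  exact ⟨b, hb, a, ha, hab.imp Eq.symm fun h ↦ h.symm⟩

theorem exists_mem_neighborSet_union (hxy : G.Adj x y) (h : Conflict G s(x, y) e) :
    ∃ b ∈ e, b ∈ G.neighborSet x ∪ G.neighborSet y := by
  obtain ⟨a, ha, b, hb, hab⟩ := h
  refine ⟨b, hb, ?_⟩
  rcases Sym2.mem_iff.1 ha with rfl | rfl <;> rcases hab with rfl | hab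
  · exact .inr hxy.symm
  · exact .inl hab
  · exact .inl hxy
  · exact .inr hab

end Conflict

theorem IsMaximalInducedMatching.exists_conflict {G : SimpleGraph V} {M : Set (Sym2 V)}
    (hM : IsMaximalInducedMatching G M) {e : Sym2 V} (he : e ∈ G.edgeSet) :
    ∃ e' ∈ M, Conflict G e' e := by
  by_contra! hfree
  have hinsert : IsInducedMatching G (insert e M) := by
    refine ⟨Set.insert_subset he hM.1.1, ?_⟩
    rintro e₁ (rfl | h₁) e₂ (rfl | h₂) hne
    · exact absurd rfl hne
    · exact fun h ↦ hfree e₂ h₂ h.symm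
    · exact hfree e₁ h₁
    · exact hM.1.2 e₁ h₁ e₂ h₂ hne
  have heM : e ∈ M := hM.2 _ hinsert (Set.subset_insert e M) ▸ Set.mem_insert e M
  exact hfree e heM (.refl G e)

/-- `(⋃ a ∈ e, N_G(a)) \ e`, the set of vertices outside the edge `e` that are adjacent to it; it is
`(N_G(x) ∪ N_G(y)) \ {x, y}` for `e = s(x, y)`, and `mAround G e` counts the edges within it. -/
def edgeNeighborSet (G : SimpleGraph V) (e : Sym2 V) : Set V :=
  (⋃ a ∈ e, G.neighborSet a) \ {a | a ∈ e}

theorem edgeNeighborSet_mk (G : SimpleGraph V) (x y : V) :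
    edgeNeighborSet G s(x, y) = (G.neighborSet x ∪ G.neighborSet y) \ {x, y} := by
  ext v
  simp [edgeNeighborSet]

theorem edgesBetween_eq_biUnion (G : SimpleGraph V) (S T : Set V) :
    edgesBetween G S T = ⋃ a ∈ S, (fun b ↦ s(a, b)) '' (G.neighborSet a ∩ T) := by
  ext e
  simp only [edgesBetween, Set.mem_ofPred_eq, Set.mem_iUnion, Set.mem_image, Set.mem_inter_iff,
    SimpleGraph.mem_neighborSet]
  constructor
  · rintro ⟨he, a, b, rfl, ha, hb⟩
    exact ⟨a, ha, b, ⟨he, hb⟩, rfl⟩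
  · rintro ⟨a, ha, b, ⟨hab, hb⟩, rfl⟩
    exact ⟨hab, a, b, rfl, ha, hb⟩

theorem edgesBetween_insert (G : SimpleGraph V) (v : V) (S T : Set V) :
    edgesBetween G (insert v S) T = edgesBetween G {v} T ∪ edgesBetween G S T := by
  simp only [edgesBetween_eq_biUnion, Set.biUnion_insert, Set.biUnion_singleton]

theorem mem_edgesBetween_univ_of_mem {G : SimpleGraph V} {S : Set V} {e : Sym2 V} {v : V}
    (he : e ∈ G.edgeSet) (hve : v ∈ e) (hv : v ∈ S) : e ∈ edgesBetween G S Set.univ := by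
  obtain ⟨w, rfl⟩ := hve
  exact ⟨he, v, w, rfl, hv, Set.mem_univ w⟩

theorem edgesWithin_subset_edgesBetween (G : SimpleGraph V) (S : Set V) :
    edgesWithin G S ⊆ edgesBetween G S S := by
  rintro ⟨a, b⟩ ⟨he, hS⟩
  exact ⟨he, a, b, rfl, hS a (Sym2.mem_mk_left a b), hS b (Sym2.mem_mk_right a b)⟩

theorem edgesWithin_insert_subset (G : SimpleGraph V) (v : V) (S : Set V) :
    edgesWithin G (insert v S) ⊆
      edgesWithin G S ∪ edgesBetween G {v} Set.univ ∩ edgesBetween G S Set.univ := by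
  rintro e ⟨he, hS⟩
  by_cases hv : v ∈ e
  · right
    obtain ⟨w, rfl⟩ := hv
    have hvw : G.Adj v w := he
    have hw : w ∈ S := (hS w (Sym2.mem_mk_right v w)).resolve_left hvw.ne'
    exact ⟨mem_edgesBetween_univ_of_mem he (Sym2.mem_mk_left v w) rfl,
      mem_edgesBetween_univ_of_mem he (Sym2.mem_mk_right v w) hw⟩
  · exact .inl ⟨he, fun a ha ↦ (hS a ha).resolve_left (ne_of_mem_of_not_mem ha hv)⟩

theorem CSet_mk_subset {G : SimpleGraph V} {x y : V} (hxy : G.Adj x y) :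
    CSet G s(x, y) ⊆
      insert s(x, y) (edgesBetween G (edgeNeighborSet G s(x, y)) Set.univ) := by
  rintro e ⟨he, hconf⟩
  rw [edgeNeighborSet_mk]
  obtain ⟨b, hbe, hb⟩ := hconf.exists_mem_neighborSet_union hxy
  by_cases hbxy : b ∈ ({x, y} : Set V)
  · obtain ⟨c, rfl⟩ := hbe
    have hbc : G.Adj b c := he
    have hc : c ∈ G.neighborSet x ∪ G.neighborSet y := by
      rcases hbxy with rfl | rfl
      exacts [.inl hbc, .inr hbc]
    by_cases hcxy : c ∈ ({x, y} : Set V)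
    · left
      rcases hbxy with rfl | rfl <;> rcases hcxy with rfl | rfl
      exacts [absurd rfl hbc.ne, rfl, Sym2.eq_swap, absurd rfl hbc.ne]
    · exact .inr (mem_edgesBetween_univ_of_mem he (Sym2.mem_mk_right b c) ⟨hc, hcxy⟩)
  · exact .inr (mem_edgesBetween_univ_of_mem he hbe ⟨hb, hbxy⟩)

section LocallyFinite

variable {G : SimpleGraph V} [G.LocallyFinite] {d : ℕ} {S T : Set V}

theorem finite_edgesBetween (hS : S.Finite) : (edgesBetween G S T).Finite := by
  rw [edgesBetween_eq_biUnion]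
  exact hS.biUnion fun a _ ↦ Set.toFinite _

theorem finite_edgesWithin (hS : S.Finite) : (edgesWithin G S).Finite :=
  (finite_edgesBetween hS).subset (edgesWithin_subset_edgesBetween G S)

theorem finite_edgeNeighborSet (x y : V) : (edgeNeighborSet G s(x, y)).Finite := by
  rw [edgeNeighborSet_mk]
  exact Set.toFinite _

theorem ncard_edgesBetween_add_le {j : ℕ} (hS : S.Finite)
    (h : ∀ a ∈ S, (G.neighborSet a ∩ T).ncard + j ≤ d) :
    (edgesBetween G S T).ncard + S.ncard * j ≤ S.ncard * d := by
  lift S to Finset V using hS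
  rw [Set.ncard_coe_finset, edgesBetween_eq_biUnion]
  calc (⋃ a ∈ (S : Set V), (fun b ↦ s(a, b)) '' (G.neighborSet a ∩ T)).ncard + S.card * j
    _ ≤ ∑ a ∈ S, (G.neighborSet a ∩ T).ncard + S.card * j := by
        gcongr
        exact (S.set_ncard_biUnion_le _).trans
          (Finset.sum_le_sum fun a _ ↦ Set.ncard_image_le (Set.toFinite _))
    _ = ∑ a ∈ S, ((G.neighborSet a ∩ T).ncard + j) := by
        rw [Finset.sum_add_distrib, Finset.sum_const, smul_eq_mul]
    _ ≤ S.card * d := Finset.sum_le_card_nsmul S _ d h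

theorem ncard_edgesBetween_singleton_add_le {j : ℕ} {a : V}
    (h : (G.neighborSet a ∩ T).ncard + j ≤ d) : (edgesBetween G {a} T).ncard + j ≤ d := by
  simpa using ncard_edgesBetween_add_le (Set.finite_singleton a) (by simpa using h)

theorem ncard_edgesBetween_univ_add_ncard_edgesWithin_le
    (hΔ : ∀ v, (G.neighborSet v).ncard ≤ d) (hS : S.Finite) :
    (edgesBetween G S Set.univ).ncard + (edgesWithin G S).ncard ≤ S.ncard * d := by
  induction S, hS using Set.Finite.induction_on with
  | empty =>
    have hbetween : edgesBetween G ∅ Set.univ = ∅ := by simp [edgesBetween_eq_biUnion]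
    have hwithin : edgesWithin G ∅ = ∅ :=
      Set.subset_empty_iff.1 <| (edgesWithin_subset_edgesBetween G ∅).trans <| by
        simp [edgesBetween_eq_biUnion]
    simp [hbetween, hwithin]
  | @insert v S hv hS ih =>
    have hstar : (edgesBetween G {v} Set.univ).ncard + 0 ≤ d :=
      ncard_edgesBetween_singleton_add_le (by simpa using hΔ v)
    have hunion := Set.ncard_union_add_ncard_inter (edgesBetween G {v} Set.univ)
      (edgesBetween G S Set.univ) (finite_edgesBetween (Set.finite_singleton v))
      (finite_edgesBetween hS)
    have hwithin := (Set.ncard_le_ncard (edgesWithin_insert_subset G v S)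
      ((finite_edgesWithin hS).union ((finite_edgesBetween hS).inter_of_right _))).trans
      (Set.ncard_union_le _ _)
    rw [edgesBetween_insert, Set.ncard_insert_of_notMem hv hS, Nat.succ_mul]
    lia

section Edge

variable {x y : V}

theorem ncard_edgeNeighborSet_add (hxy : G.Adj x y) :
    (edgeNeighborSet G s(x, y)).ncard + (G.neighborSet x ∩ G.neighborSet y).ncard + 2 =
      (G.neighborSet x).ncard + (G.neighborSet y).ncard := by
  have hsub : {x, y} ⊆ G.neighborSet x ∪ G.neighborSet y :=
    Set.pair_subset (.inr hxy.symm) (.inl hxy)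
  have hdiff := Set.ncard_sdiff_add_ncard_of_subset hsub (Set.toFinite _)
  have hunion := Set.ncard_union_add_ncard_inter (G.neighborSet x) (G.neighborSet y)
  rw [Set.ncard_pair hxy.ne] at hdiff
  rw [edgeNeighborSet_mk]
  lia

theorem ncard_CSet_add_mAround_le (hΔ : ∀ v, (G.neighborSet v).ncard ≤ d) (hxy : G.Adj x y) :
    (CSet G s(x, y)).ncard + mAround G s(x, y) +
      d * (G.neighborSet x ∩ G.neighborSet y).ncard + 2 * d ≤ 2 * d ^ 2 + 1 := by
  set S := edgeNeighborSet G s(x, y)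
  have hSfin : S.Finite := finite_edgeNeighborSet x y
  have hC : (CSet G s(x, y)).ncard ≤ (edgesBetween G S Set.univ).ncard + 1 :=
    (Set.ncard_le_ncard (CSet_mk_subset hxy) ((finite_edgesBetween hSfin).insert _)).trans
      (Set.ncard_insert_le _ _)
  have hcount : (edgesBetween G S Set.univ).ncard + mAround G s(x, y) ≤ S.ncard * d :=
    ncard_edgesBetween_univ_add_ncard_edgesWithin_le hΔ hSfin
  have hcard : S.ncard + (G.neighborSet x ∩ G.neighborSet y).ncard + 2 ≤ 2 * d := by
    linarith [ncard_edgeNeighborSet_add hxy, hΔ x, hΔ y]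
  linarith [Nat.mul_le_mul_right d hcard]

end Edge

section Star

variable {x : V} {A Z : Set V}

theorem ncard_neighborSet_inter_add_le {a : V} (hΔ : ∀ v, (G.neighborSet v).ncard ≤ d)
    (hxa : G.Adj x a) (hxZ : x ∉ Z) (hNZ : Disjoint (G.neighborSet x) Z) :
    (G.neighborSet a ∩ Z).ncard + ((G.neighborSet x ∩ G.neighborSet a).ncard + 1) ≤ d := by
  have hx : x ∉ G.neighborSet x ∩ G.neighborSet a := fun h ↦ G.irrefl h.1
  have hdisj : Disjoint (G.neighborSet a ∩ Z)
      (insert x (G.neighborSet x ∩ G.neighborSet a)) := by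
    rw [Set.disjoint_insert_right]
    exact ⟨fun h ↦ hxZ h.2, hNZ.symm.mono Set.inter_subset_right Set.inter_subset_left⟩
  rw [← Set.ncard_insert_of_notMem hx, ← Set.ncard_union_eq hdisj]
  refine (Set.ncard_le_ncard ?_ (Set.toFinite _)).trans (hΔ a)
  exact Set.union_subset Set.inter_subset_left
    (Set.insert_subset hxa.symm Set.inter_subset_right)

theorem adj_of_forall_conflict {a a' z' : V} (hZ : G.IsIndepSet Z) (ha : a ∉ Z) (ha' : a' ∉ Z)
    (hne : a' ≠ a) (hadj : ¬ G.Adj a a') (haz' : G.Adj a' z') (hz' : z' ∈ Z)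
    (hle : (G.neighborSet a' ∩ Z).ncard ≤ (G.neighborSet a ∩ Z).ncard)
    (hconf : ∀ z, G.Adj a z → z ∈ Z → Conflict G s(a, z) s(a', z')) : G.Adj a z' := by
  by_contra hcon
  obtain ⟨z, ⟨haz, hz⟩, hza'⟩ : ∃ z ∈ G.neighborSet a ∩ Z, z ∉ G.neighborSet a' ∩ Z := by
    refine Set.not_subset.1 fun hsub ↦ hcon ?_
    have heq := Set.eq_of_subset_of_ncard_le hsub hle (Set.toFinite _)
    have hmem : z' ∈ G.neighborSet a ∩ Z := heq ▸ ⟨haz', hz'⟩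
    exact hmem.1
  obtain ⟨p, hp, q, hq, hpq⟩ := hconf z haz hz
  rcases Sym2.mem_iff.1 hp with rfl | rfl <;> rcases Sym2.mem_iff.1 hq with rfl | rfl <;>
    rcases hpq with rfl | hpq
  · exact hne rfl
  · exact hadj hpq
  · exact ha hz'
  · exact hcon hpq
  · exact ha' hz
  · exact hza' ⟨hpq.symm, hz⟩
  · exact hcon haz
  · exact hZ hz hz' hpq.ne hpq

theorem exists_edgesBetween_subset (hx : (G.neighborSet x).Nonempty)
    (hA : A ⊆ G.neighborSet x) (hxZ : x ∉ Z) (hNZ : Disjoint (G.neighborSet x) Z)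
    (hZ : G.IsIndepSet Z)
    (hconf : ∀ e ∈ edgesBetween G A Z, ∀ e' ∈ edgesBetween G A Z, Conflict G e e') :
    ∃ a ∈ G.neighborSet x, edgesBetween G A Z ⊆
      edgesBetween G {a} Z ∪ edgesWithin G (edgeNeighborSet G s(x, a)) ∪
        edgesBetween G (G.neighborSet x ∩ G.neighborSet a) Z := by
  rcases A.eq_empty_or_nonempty with rfl | hAne
  · obtain ⟨a, ha⟩ := hx
    exact ⟨a, ha, by simp [edgesBetween_eq_biUnion]⟩
  obtain ⟨a, haA, hmax⟩ := Set.exists_max_image A (fun a ↦ (G.neighborSet a ∩ Z).ncard)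
    ((Set.toFinite _).subset hA) hAne
  refine ⟨a, hA haA, ?_⟩
  rintro _ ⟨haz', a', z', rfl, haA', hz'⟩
  by_cases haa : a' = a
  · exact .inl (.inl ⟨haz', a', z', rfl, haa, hz'⟩)
  by_cases hadj : G.Adj a a'
  · exact .inr ⟨haz', a', z', rfl, ⟨hA haA', hadj⟩, hz'⟩
  have hnotMem : ∀ b ∈ A, b ∉ Z := fun b hb ↦ Set.disjoint_left.1 hNZ (hA hb)
  have haz : G.Adj a z' := by
    refine adj_of_forall_conflict hZ (hnotMem a haA) (hnotMem a' haA') haa hadj haz' hz'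
      (hmax a' haA') fun z haz hz ↦ ?_
    exact hconf _ ⟨haz, a, z, rfl, haA, hz⟩ _ ⟨haz', a', z', rfl, haA', hz'⟩
  refine .inl (.inr ⟨haz', fun b hb ↦ ?_⟩)
  rw [edgeNeighborSet_mk]
  rcases Sym2.mem_iff.1 hb with rfl | rfl
  · exact ⟨.inl (hA haA'), by simp [haa, (hA haA').ne']⟩
  · exact ⟨.inr haz, by simp [haz.ne', ne_of_mem_of_not_mem hz' hxZ]⟩

theorem exists_ncard_edgesBetween_add_ncard_CSet_le (hΔ : ∀ v, (G.neighborSet v).ncard ≤ d)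
    (hx : (G.neighborSet x).Nonempty)
    (hA : A ⊆ G.neighborSet x) (hxZ : x ∉ Z) (hNZ : Disjoint (G.neighborSet x) Z)
    (hZ : G.IsIndepSet Z)
    (hconf : ∀ e ∈ edgesBetween G A Z, ∀ e' ∈ edgesBetween G A Z, Conflict G e e') :
    ∃ a ∈ G.neighborSet x, (edgesBetween G A Z).ncard + (CSet G s(x, a)).ncard +
      3 * (G.neighborSet x ∩ G.neighborSet a).ncard + d ≤ 2 * d ^ 2 := by
  obtain ⟨a, ha, hsub⟩ := exists_edgesBetween_subset hx hA hxZ hNZ hZ hconf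
  refine ⟨a, ha, ?_⟩
  set T := G.neighborSet x ∩ G.neighborSet a
  have hTfin : T.Finite := Set.toFinite _
  have hcover : (edgesBetween G A Z).ncard ≤ (edgesBetween G {a} Z).ncard +
      mAround G s(x, a) + (edgesBetween G T Z).ncard := by
    refine (Set.ncard_le_ncard hsub ?_).trans
      ((Set.ncard_union_le _ _).trans (Nat.add_le_add_right (Set.ncard_union_le _ _) _))
    exact ((finite_edgesBetween (Set.finite_singleton a)).union
      (finite_edgesWithin (finite_edgeNeighborSet x a))).union (finite_edgesBetween hTfin)
  have hstar : (edgesBetween G {a} Z).ncard + (T.ncard + 1) ≤ d :=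
    ncard_edgesBetween_singleton_add_le (ncard_neighborSet_inter_add_le hΔ ha hxZ hNZ)
  have hcommon : (edgesBetween G T Z).ncard + T.ncard * 2 ≤ T.ncard * d := by
    refine ncard_edgesBetween_add_le hTfin fun t ⟨hxt, hat⟩ ↦ ?_
    have hpos : 0 < (G.neighborSet x ∩ G.neighborSet t).ncard :=
      (Set.ncard_pos (Set.toFinite _)).2 ⟨a, ha, hat.symm⟩
    linarith [ncard_neighborSet_inter_add_le hΔ hxt hxZ hNZ]
  linarith [ncard_CSet_add_mAround_le hΔ ha]

end Star

end LocallyFinite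

/-- The vertices at distance at least two from every edge of `M` other than `e`. They carry the
private conflict edges of `e`. -/
def privateSet (G : SimpleGraph V) (M : Set (Sym2 V)) (e : Sym2 V) : Set V :=
  {v | ∀ e' ∈ M, e' ≠ e → ∀ u ∈ e', u ≠ v ∧ ¬ G.Adj u v}

section Private

variable {G : SimpleGraph V} {M : Set (Sym2 V)} {x y : V}

theorem mem_PCSet_iff {e e' : Sym2 V} :
    e' ∈ PCSet G M e ↔ e' ∈ CSet G e ∧ ∀ v ∈ e', v ∈ privateSet G M e := by
  refine and_congr_right fun he' ↦ ?_
  simp only [Set.mem_iUnion, CSet, Conflict, privateSet, Set.mem_ofPred_eq, Set.mem_sdiff,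
    Set.mem_singleton_iff]
  have := he'.1
  grind

theorem LSStable.conflict (hstab : LSStable G M) {e e₁ e₂ : Sym2 V} (he : e ∈ M)
    (h₁ : e₁ ∈ PCSet G M e) (h₂ : e₂ ∈ PCSet G M e) : Conflict G e₁ e₂ := by
  rcases eq_or_ne e₁ e₂ with rfl | hne
  · exact .refl G e₁
  · exact (hstab e he e₁ h₁ e₂ h₂ hne).2

/-- The private vertices of the edge `xy` that are not adjacent to it. -/
def outerPrivateSet (G : SimpleGraph V) (M : Set (Sym2 V)) (x y : V) : Set V :=
  privateSet G M s(x, y) \ (G.neighborSet x ∪ G.neighborSet y)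

theorem outerPrivateSet_comm (G : SimpleGraph V) (M : Set (Sym2 V)) (x y : V) :
    outerPrivateSet G M x y = outerPrivateSet G M y x := by
  rw [outerPrivateSet, outerPrivateSet, Sym2.eq_swap, Set.union_comm]

theorem isIndepSet_outerPrivateSet (hdom : ∀ e ∈ G.edgeSet, ∃ e' ∈ M, Conflict G e' e)
    (hxy : G.Adj x y) : G.IsIndepSet (outerPrivateSet G M x y) := by
  intro z hz z' hz' _ hadj
  have hmem : ∀ w ∈ s(z, z'), w ∈ outerPrivateSet G M x y := by
    rintro w hw
    rcases Sym2.mem_iff.1 hw with rfl | rfl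
    exacts [hz, hz']
  obtain ⟨e, heM, hconf⟩ := hdom s(z, z') hadj
  by_cases hexy : e = s(x, y)
  · subst hexy
    obtain ⟨w, hw, hwxy⟩ := hconf.exists_mem_neighborSet_union hxy
    exact (hmem w hw).2 hwxy
  · obtain ⟨u, hu, w, hw, huw⟩ := hconf
    have hfar := (hmem w hw).1 e heM hexy u hu
    exact huw.elim hfar.1 hfar.2

theorem edgesBetween_subset_PCSet :
    edgesBetween G (G.neighborSet x ∩ privateSet G M s(x, y)) (outerPrivateSet G M x y) ⊆
      PCSet G M s(x, y) := by
  rintro _ ⟨he, a, z, rfl, ⟨hxa, ha⟩, hz⟩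
  refine mem_PCSet_iff.2
    ⟨⟨he, x, Sym2.mem_mk_left x y, a, Sym2.mem_mk_left a z, .inr hxa⟩, fun v hv ↦ ?_⟩
  rcases Sym2.mem_iff.1 hv with rfl | rfl
  exacts [ha, hz.1]

theorem PCSet_mk_subset (hxy : G.Adj x y) :
    PCSet G M s(x, y) ⊆
      edgesBetween G {x, y} Set.univ ∪ edgesWithin G (edgeNeighborSet G s(x, y)) ∪
        (edgesBetween G (G.neighborSet x ∩ privateSet G M s(x, y)) (outerPrivateSet G M x y) ∪
          edgesBetween G (G.neighborSet y ∩ privateSet G M s(x, y))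
            (outerPrivateSet G M x y)) := by
  intro e hePC
  obtain ⟨⟨he, hconf⟩, hpriv⟩ := mem_PCSet_iff.1 hePC
  obtain ⟨a, ⟨b, rfl⟩, ha⟩ := hconf.exists_mem_neighborSet_union hxy
  have haP := hpriv a (Sym2.mem_mk_left a b)
  have hbP := hpriv b (Sym2.mem_mk_right a b)
  by_cases haxy : a ∈ ({x, y} : Set V)
  · exact .inl (.inl (mem_edgesBetween_univ_of_mem he (Sym2.mem_mk_left a b) haxy))
  by_cases hbxy : b ∈ ({x, y} : Set V)
  · exact .inl (.inl (mem_edgesBetween_univ_of_mem he (Sym2.mem_mk_right a b) hbxy))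
  by_cases hb : b ∈ G.neighborSet x ∪ G.neighborSet y
  · refine .inl (.inr ⟨he, fun v hv ↦ ?_⟩)
    rw [edgeNeighborSet_mk]
    rcases Sym2.mem_iff.1 hv with rfl | rfl
    exacts [⟨ha, haxy⟩, ⟨hb, hbxy⟩]
  · right
    exact ha.imp (fun hxa ↦ ⟨he, a, b, rfl, ⟨hxa, haP⟩, hbP, hb⟩)
      fun hya ↦ ⟨he, a, b, rfl, ⟨hya, haP⟩, hbP, hb⟩

variable [G.LocallyFinite] {d : ℕ}

theorem ncard_PCSet_mk_add_one_le (hΔ : ∀ v, (G.neighborSet v).ncard ≤ d) (hxy : G.Adj x y) :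
    (PCSet G M s(x, y)).ncard + 1 ≤ 2 * d + mAround G s(x, y) +
      (edgesBetween G (G.neighborSet x ∩ privateSet G M s(x, y))
        (outerPrivateSet G M x y)).ncard +
      (edgesBetween G (G.neighborSet y ∩ privateSet G M s(x, y))
        (outerPrivateSet G M x y)).ncard := by
  have hpair : ({x, y} : Set V).Finite := Set.toFinite _
  have hmeet : (edgesBetween G {x, y} Set.univ).ncard + 1 ≤ 2 * d := by
    have hone : 0 < (edgesWithin G {x, y}).ncard :=
      (Set.ncard_pos (finite_edgesWithin hpair)).2 ⟨s(x, y), hxy, by simp⟩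
    have hcount := ncard_edgesBetween_univ_add_ncard_edgesWithin_le hΔ hpair
    rw [Set.ncard_pair hxy.ne] at hcount
    lia
  have hcover := (Set.ncard_le_ncard (PCSet_mk_subset (M := M) hxy)
    (((finite_edgesBetween hpair).union (finite_edgesWithin (finite_edgeNeighborSet x y))).union
      ((finite_edgesBetween (Set.toFinite _)).union (finite_edgesBetween (Set.toFinite _))))).trans
    ((Set.ncard_union_le _ _).trans
      (Nat.add_le_add (Set.ncard_union_le _ _) (Set.ncard_union_le _ _)))
  have hm : mAround G s(x, y) = (edgesWithin G (edgeNeighborSet G s(x, y))).ncard := rfl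
  lia

variable {f g : ℝ}

theorem ncard_edgesBetween_outerPrivateSet_le (hΔ : ∀ v, (G.neighborSet v).ncard ≤ d)
    (hdom : ∀ e ∈ G.edgeSet, ∃ e' ∈ M, Conflict G e' e) (hstab : LSStable G M)
    (hf : ∀ e ∈ G.edgeSet, f ≤ ((CSet G e).ncard : ℝ))
    (hg : ∀ x y, G.Adj x y → g ≤ ((G.neighborSet x ∩ G.neighborSet y).ncard : ℝ))
    (hxy : G.Adj x y) (hM : s(x, y) ∈ M) :
    ((edgesBetween G (G.neighborSet x ∩ privateSet G M s(x, y))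
      (outerPrivateSet G M x y)).ncard : ℝ) ≤ 2 * (d : ℝ) ^ 2 - d - f - 3 * g := by
  obtain ⟨a, hxa, hle⟩ := exists_ncard_edgesBetween_add_ncard_CSet_le (x := x)
    (A := G.neighborSet x ∩ privateSet G M s(x, y)) (Z := outerPrivateSet G M x y) hΔ
    ⟨y, hxy⟩ Set.inter_subset_left (fun h ↦ h.2 (.inr hxy.symm))
    (Set.disjoint_sdiff_right.mono_left Set.subset_union_left)
    (isIndepSet_outerPrivateSet hdom hxy)
    (fun _ he _ he' ↦ hstab.conflict hM (edgesBetween_subset_PCSet he)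
      (edgesBetween_subset_PCSet he'))
  have hle' := (Nat.cast_le (α := ℝ)).2 hle
  push_cast at hle'
  linarith [hf s(x, a) hxa, hg x a hxa]

theorem stmt18_general (hΔ : ∀ v, (G.neighborSet v).ncard ≤ d) (hM : M ⊆ G.edgeSet)
    (hdom : ∀ e ∈ G.edgeSet, ∃ e' ∈ M, Conflict G e' e) (hstab : LSStable G M)
    (hf : ∀ e ∈ G.edgeSet, f ≤ ((CSet G e).ncard : ℝ))
    (hg : ∀ x y, G.Adj x y → g ≤ ((G.neighborSet x ∩ G.neighborSet y).ncard : ℝ))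
    {e : Sym2 V} (he : e ∈ M) :
    ((PCSet G M e).ncard : ℝ) ≤ 4 * (d : ℝ) ^ 2 - 1 - 2 * f - 6 * g + mAround G e := by
  obtain ⟨x, y⟩ := e
  have hxy : G.Adj x y := hM he
  have hX := ncard_edgesBetween_outerPrivateSet_le hΔ hdom hstab hf hg hxy he
  have hY := ncard_edgesBetween_outerPrivateSet_le hΔ hdom hstab hf hg hxy.symm
    (Sym2.eq_swap ▸ he)
  rw [outerPrivateSet_comm, Sym2.eq_swap] at hY
  have htotal := (Nat.cast_le (α := ℝ)).2 (ncard_PCSet_mk_add_one_le (M := M) hΔ hxy)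
  push_cast at htotal
  linarith

end Private

/-- bound on the total number of private conflict edges. -/
theorem stmt18 [Fintype V] (G : SimpleGraph V) (d : ℕ) (hd : 3 ≤ d)
    (hΔ : ∀ v : V, (G.neighborSet v).ncard ≤ d)
    (M : Finset (Sym2 V)) (hmax : IsMaximalInducedMatching G ↑M)
    (hstab : LSStable G ↑M)
    (f g : ℝ)
    (hf : ∀ e ∈ G.edgeSet, f ≤ ((CSet G e).ncard : ℝ))
    (hg : ∀ x y : V, G.Adj x y → g ≤ ((G.neighborSet x ∩ G.neighborSet y).ncard : ℝ)) :
    ∑ e ∈ M, ((PCSet G ↑M e).ncard : ℝ) ≤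
      (4 * (d : ℝ) ^ 2 - 1 - 2 * f - 6 * g) * M.card +
        ∑ e ∈ M, (mAround G e : ℝ) := by
  refine (Finset.sum_le_sum fun e he ↦
    stmt18_general hΔ hmax.1.1 (fun _ ↦ hmax.exists_conflict) hstab hf hg he).trans_eq ?_
  rw [Finset.sum_add_distrib, Finset.sum_const, nsmul_eq_mul, mul_comm]
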